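/- Let V be a finite set of n vertices with a cost function c : V × V → ℝ satisfying the distinct-cost condition, and let k < l ≤ n be positive integers. For every injective k-tuple of vertices, the tour T produced by the nearest-neighbor greedy completion of that k-tuple is equal to the tour produced by the nearest-neighbor greedy completion of the injective l-tuple consisting of the first l vertices of T. In particular, the set of tours produced by k-RNN starting tuples is contained in the set of tours produced by l-RNN starting tuples. -/

import Mathlib

/-!
Running the greedy completion for `a + b` steps is the same as running it for `a` steps and then
for `b` steps (`greedyAux_add`). From a nonempty repetition-free list, every step that still has an
unvisited vertex available appends exactly one new vertex (`exists_greedyStep_eq`). Hence the first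
`l` vertices of the tour `T` completing a `k`-tuple are exactly the state after `l - k` steps, and
completing that state performs the remaining `n - l` steps, which gives `T` again. The inclusion of
the sets of tours follows because this state is a repetition-free list of length `l`.
-/

/-- One nearest-neighbor greedy extension step: if the partial tour `l` is nonempty and
there is an unvisited vertex, append the unvisited vertex of minimal cost from the last
vertex of `l` (under the distinct-cost condition this vertex is unique). -/
noncomputable def greedyStep {V : Type*} [Fintype V] [DecidableEq V]
    (c : V → V → ℝ) (l : List V) : List V :=
  match l.getLast? with
  | none => l
  | some v =>
    match (Finset.univ \ l.toFinset).toList.argmin (c v) with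
    | none => l
    | some s => l ++ [s]

/-- Iterate the greedy extension step `m` times. -/
noncomputable def greedyAux {V : Type*} [Fintype V] [DecidableEq V]
    (c : V → V → ℝ) : ℕ → List V → List V
  | 0, l => l
  | m + 1, l => greedyAux c m (greedyStep c l)

/-- The nearest-neighbor greedy completion of a partial tour `l`: repeatedly append the
unvisited vertex nearest to the current last vertex until no unvisited vertices remain. -/
noncomputable def greedy {V : Type*} [Fintype V] [DecidableEq V]
    (c : V → V → ℝ) (l : List V) : List V :=
  greedyAux c (Fintype.card V - l.length) l

/-- The cost of a tour `(w₁, …, wₙ)`, namely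
`c w₁ w₂ + c w₂ w₃ + ⋯ + c wₙ₋₁ wₙ + c wₙ w₁`. -/
def tourCost {V : Type*} (c : V → V → ℝ) (l : List V) : ℝ :=
  ((l.zip (l.rotate 1)).map fun p => c p.1 p.2).sum

theorem exists_greedyStep_eq {V : Type*} [Fintype V] [DecidableEq V] (c : V → V → ℝ)
    {p : List V} (hp : p ≠ []) (hcard : p.length < Fintype.card V) :
    ∃ s, s ∉ p ∧ greedyStep c p = p ++ [s] := by
  obtain ⟨x, hx⟩ : ∃ x, x ∉ p.toFinset := by
    by_contra! h
    have h1 := Finset.card_le_card (fun x _ => h x : Finset.univ ⊆ p.toFinset)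
    have h2 := p.toFinset_card_le
    rw [Finset.card_univ] at h1
    omega
  unfold greedyStep
  rw [List.getLast?_eq_some_getLast hp]
  cases h : (Finset.univ \ p.toFinset).toList.argmin (c (p.getLast hp)) with
  | none =>
    rw [List.argmin_eq_none, Finset.toList_eq_nil] at h
    have : x ∈ Finset.univ \ p.toFinset := by simpa using hx
    simp [h] at this
  | some s =>
    refine ⟨s, ?_, by simp [h]⟩
    simpa using List.argmin_mem h

theorem greedyAux_add {V : Type*} [Fintype V] [DecidableEq V] (c : V → V → ℝ)
    (a b : ℕ) (p : List V) :
    greedyAux c (a + b) p = greedyAux c b (greedyAux c a p) := by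
  induction a generalizing p with
  | zero => rw [Nat.zero_add]; rfl
  | succ a ih => rw [Nat.succ_add]; exact ih _

theorem greedyAux_spec {V : Type*} [Fintype V] [DecidableEq V] (c : V → V → ℝ)
    (m : ℕ) {p : List V} (hp : p ≠ []) (hnd : p.Nodup)
    (hcard : p.length + m ≤ Fintype.card V) :
    p <+: greedyAux c m p ∧ (greedyAux c m p).Nodup ∧
      (greedyAux c m p).length = p.length + m := by
  induction m generalizing p with
  | zero => exact ⟨List.prefix_rfl, hnd, rfl⟩
  | succ m ih =>
    obtain ⟨s, hs, he⟩ := exists_greedyStep_eq c hp (by omega)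
    have hnd' : (p ++ [s]).Nodup := by
      rw [← List.concat_eq_append]
      exact hnd.concat hs
    obtain ⟨h1, h2, h3⟩ := ih (p := p ++ [s]) (by simp) hnd'
      (by simp only [List.length_append, List.length_singleton]; omega)
    rw [greedyAux, he]
    refine ⟨(List.prefix_append _ _).trans h1, h2, ?_⟩
    rw [h3, List.length_append, List.length_singleton]
    omega

/-- The first `l` vertices of a completed tour are the state of the greedy completion after
`l - p.length` steps. -/
theorem take_greedy {V : Type*} [Fintype V] [DecidableEq V] (c : V → V → ℝ)
    {l : ℕ} {p : List V} (hp : p ≠ []) (hnd : p.Nodup) (hpl : p.length ≤ l)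
    (hl : l ≤ Fintype.card V) :
    (greedy c p).take l = greedyAux c (l - p.length) p := by
  obtain ⟨h1, h2, h3⟩ := greedyAux_spec c (l - p.length) hp hnd (by omega)
  have hlen : (greedyAux c (l - p.length) p).length = l := by omega
  have hne : greedyAux c (l - p.length) p ≠ [] := fun h => hp (by simpa [h] using h1)
  obtain ⟨h4, -, -⟩ := greedyAux_spec c (Fintype.card V - l) hne h2 (by omega)
  rw [← greedyAux_add, show l - p.length + (Fintype.card V - l) = Fintype.card V - p.length
    by omega] at h4
  have h5 := List.prefix_iff_eq_take.1 h4
  rw [hlen] at h5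
  exact h5.symm

theorem greedy_take_greedy {V : Type*} [Fintype V] [DecidableEq V] (c : V → V → ℝ)
    {l : ℕ} {p : List V} (hp : p ≠ []) (hnd : p.Nodup) (hpl : p.length ≤ l)
    (hl : l ≤ Fintype.card V) :
    greedy c ((greedy c p).take l) = greedy c p := by
  obtain ⟨-, -, h3⟩ := greedyAux_spec c (l - p.length) hp hnd (by omega)
  rw [take_greedy c hp hnd hpl hl, greedy, h3, ← greedyAux_add, greedy]
  congr 1
  omega

/-- Under the distinct-cost condition, for positive integers
`k < l ≤ n` and every injective `k`-tuple of vertices, the tour `T` produced by the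
nearest-neighbor greedy completion of that `k`-tuple equals the tour produced by the
greedy completion of the `l`-tuple consisting of the first `l` vertices of `T`.
In particular, every tour produced from a `k`-RNN starting tuple is also produced from
some `l`-RNN starting tuple. -/
theorem greedy_take_eq_and_subset {V : Type*} [Fintype V] [DecidableEq V]
    (c : V → V → ℝ) (hc : ∀ a b b' : V, b ≠ b' → c a b ≠ c a b')
    {k l : ℕ} (hk : 0 < k) (hkl : k < l) (hl : l ≤ Fintype.card V) :
    (∀ t : Fin k → V, Function.Injective t →
      greedy c ((greedy c (List.ofFn t)).take l) = greedy c (List.ofFn t)) ∧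
    (∀ T : List V,
      (∃ t : Fin k → V, Function.Injective t ∧ T = greedy c (List.ofFn t)) →
      ∃ s : Fin l → V, Function.Injective s ∧ T = greedy c (List.ofFn s)) := by
  have key (t : Fin k → V) (ht : Function.Injective t) :
      greedy c ((greedy c (List.ofFn t)).take l) = greedy c (List.ofFn t) ∧
      ((greedy c (List.ofFn t)).take l).Nodup ∧
      ((greedy c (List.ofFn t)).take l).length = l := by
    have hp : List.ofFn t ≠ [] := by
      rw [Ne, List.ofFn_eq_nil_iff]
      omega
    have hnd : (List.ofFn t).Nodup := List.nodup_ofFn.2 ht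
    have hlen : (List.ofFn t).length = k := List.length_ofFn
    refine ⟨greedy_take_greedy c hp hnd (by omega) hl, ?_⟩
    rw [take_greedy c hp hnd (by omega) hl]
    obtain ⟨-, h2, h3⟩ := greedyAux_spec c (l - (List.ofFn t).length) hp hnd (by omega)
    exact ⟨h2, by omega⟩
  refine ⟨fun t ht => (key t ht).1, ?_⟩
  rintro T ⟨t, ht, rfl⟩
  obtain ⟨h1, h2, h3⟩ := key t ht
  generalize (greedy c (List.ofFn t)).take l = q at h1 h2 h3
  subst h3
  exact ⟨q.get, List.nodup_iff_injective_get.1 h2, by rw [List.ofFn_get, h1]⟩
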